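/- (Case II of the proof of Theorem 3.1, conditional form.) Assume S is regular and the pointwise Γ-consistency hypothesis holds with Γ(t) = β·t^α for some α ∈ (0,1] and β > 0. Let L ∈ A and s ∈ S, and assume c̄_0 > min_{1≤j≤n_e} c̄_j. Then C(L,s) − C* ≥ β^{−1/α}·(D(L,s) − D*)^{1/α} / (n_e·(l̄ + Σ_{j=1}^{n_e} C_j))^{1/α − 1}. -/

import Mathlib

open Finset

/-- Conditional deferral error `D(L,s)`. -/
noncomputable def Dcond (nE : ℕ) (cbar : Fin nE → ℝ)
    (sel : (Fin (nE + 1) → ℝ) → Fin (nE + 1)) (L : ℝ) (s : Fin (nE + 1) → ℝ) : ℝ :=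
  (if sel s = 0 then L else 0) + ∑ j : Fin nE, if sel s = j.succ then cbar j else 0

/-- Best-in-class conditional deferral error `D* = min{c̄₀, c̄₁, ..., c̄_{n_e}}`, with
`c̄₀ = sInf A`. -/
noncomputable def Dstar (nE : ℕ) (cbar : Fin nE → ℝ) (A : Set ℝ) : ℝ :=
  min (sInf A) (⨅ j, cbar j)

/-- Conditional surrogate error `C(L,s)`. -/
noncomputable def Ccond (nE : ℕ) (cbar : Fin nE → ℝ)
    (ℓ : (Fin (nE + 1) → ℝ) → Fin (nE + 1) → ℝ) (L : ℝ) (s : Fin (nE + 1) → ℝ) : ℝ :=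
  (∑ j, cbar j) * ℓ s 0
    + ∑ j : Fin nE, (L + ∑ j' ∈ univ.erase j, cbar j') * ℓ s j.succ
    - ((nE : ℝ) - 1) * L

/-- Best-in-class conditional surrogate error `C*`. -/
noncomputable def Cstar (nE : ℕ) (cbar : Fin nE → ℝ)
    (ℓ : (Fin (nE + 1) → ℝ) → Fin (nE + 1) → ℝ) (A : Set ℝ)
    (S : Set (Fin (nE + 1) → ℝ)) : ℝ :=
  sInf {u | ∃ L' ∈ A, ∃ s' ∈ S, u = Ccond nE cbar ℓ L' s'}

/-! The deferral problem with base cost `L` and expert costs `c̄ⱼ` is a cost-sensitive classification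
problem with label costs `c = (L, c̄₁, …, c̄_{n_e})`. Weight each label by the total cost of the
*other* labels, `wⱼ = ∑ c - cⱼ`. Up to a term depending only on `L`, the surrogate error `C(L, ·)`
is the `w`-weighted surrogate risk, while the `w`-weighted zero-one regret of choosing `j` over `i`
is `cⱼ - cᵢ`. Normalising `w` to a probability vector divides both regrets by `∑ w = n_e ∑ c`, and
the consistency hypothesis at that vector, solved for the surrogate regret, yields the bound: the
power `1/α` of the normalisation on one side against the first power on the other leaves the
exponent `1/α - 1`.
-/

section CostSensitive

variable {X ι : Type*}

/-- The zero-one loss of the classifier `sel`. -/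
def zeroOneLoss [DecidableEq ι] (sel : X → ι) (s : X) (j : ι) : ℝ :=
  if sel s ≠ j then 1 else 0

theorem zeroOneLoss_nonneg [DecidableEq ι] (sel : X → ι) (s : X) (j : ι) :
    0 ≤ zeroOneLoss sel s j := by
  unfold zeroOneLoss
  split_ifs <;> norm_num

variable [Fintype ι] {S : Set X} {sel : X → ι} {φ ℓ : X → ι → ℝ} {w c : ι → ℝ}
  {α β : ℝ} {s : X}

/-- The conditional risk of the prediction `s` for the loss `φ` when label `j` has weight `w j`.
The weights need not sum to one. -/
def condRisk (φ : X → ι → ℝ) (w : ι → ℝ) (s : X) : ℝ :=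
  ∑ j, w j * φ s j

/-- The conditional regret: the excess of the conditional risk of `s` over the best one in `S`. -/
noncomputable def condRegret (φ : X → ι → ℝ) (S : Set X) (w : ι → ℝ) (s : X) : ℝ :=
  condRisk φ w s - sInf {v | ∃ s' ∈ S, v = condRisk φ w s'}

theorem condRisk_nonneg (hφ : ∀ s j, 0 ≤ φ s j) (hw : ∀ j, 0 ≤ w j) (s : X) :
    0 ≤ condRisk φ w s :=
  sum_nonneg fun j _ => mul_nonneg (hw j) (hφ s j)

theorem condRisk_smul (φ : X → ι → ℝ) (a : ℝ) (w : ι → ℝ) (s : X) :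
    condRisk φ (a • w) s = a * condRisk φ w s := by
  simp only [condRisk, Pi.smul_apply, smul_eq_mul, mul_assoc, mul_sum]

theorem condRisk_sub_le_condRegret (hφ : ∀ s j, 0 ≤ φ s j) (hw : ∀ j, 0 ≤ w j) (s : X) {s' : X}
    (hs' : s' ∈ S) : condRisk φ w s - condRisk φ w s' ≤ condRegret φ S w s := by
  have hbdd : BddBelow {v | ∃ s' ∈ S, v = condRisk φ w s'} := by
    refine ⟨0, ?_⟩
    rintro _ ⟨t, -, rfl⟩
    exact condRisk_nonneg hφ hw t
  exact sub_le_sub_left (csInf_le hbdd ⟨s', hs', rfl⟩) _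

theorem condRegret_nonneg (hφ : ∀ s j, 0 ≤ φ s j) (hw : ∀ j, 0 ≤ w j) (hs : s ∈ S) :
    0 ≤ condRegret φ S w s := by
  simpa only [sub_self] using condRisk_sub_le_condRegret hφ hw s hs

theorem condRegret_le (hs : s ∈ S) {b : ℝ} (hb : ∀ s' ∈ S, condRisk φ w s - condRisk φ w s' ≤ b) :
    condRegret φ S w s ≤ b := by
  rw [condRegret, sub_le_comm]
  refine le_csInf ⟨_, s, hs, rfl⟩ ?_
  rintro _ ⟨s', hs', rfl⟩
  exact sub_le_comm.mp (hb s' hs')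

open scoped Pointwise in
theorem condRegret_smul {a : ℝ} (ha : 0 ≤ a) (φ : X → ι → ℝ) (S : Set X) (w : ι → ℝ) (s : X) :
    condRegret φ S (a • w) s = a * condRegret φ S w s := by
  have hrange : {v | ∃ s' ∈ S, v = condRisk φ (a • w) s'}
      = a • {v | ∃ s' ∈ S, v = condRisk φ w s'} := by
    ext v
    simp only [condRisk_smul, Set.mem_smul_set, Set.mem_ofPred_eq, smul_eq_mul]
    constructor
    · rintro ⟨s', hs', rfl⟩
      exact ⟨_, ⟨s', hs', rfl⟩, rfl⟩
    · rintro ⟨_, ⟨s', hs', rfl⟩, rfl⟩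
      exact ⟨s', hs', rfl⟩
  rw [condRegret, hrange, Real.sInf_smul_of_nonneg ha, condRisk_smul, smul_eq_mul, ← mul_sub,
    condRegret]

theorem rpow_div_le_of_div_le_mul_rpow {d r W B : ℝ} (hα : α ∈ Set.Ioc (0 : ℝ) 1) (hβ : 0 < β)
    (hd : 0 ≤ d) (hr : 0 ≤ r) (hW : 0 < W) (hWB : W ≤ B) (h : d / W ≤ β * (r / W) ^ α) :
    β ^ (-(1 / α)) * d ^ (1 / α) / B ^ (1 / α - 1) ≤ r := by
  have hinv : 1 ≤ 1 / α := (one_le_div hα.1).mpr hα.2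
  have hsolve : (d / W / β) ^ (1 / α) ≤ r / W := by
    rw [one_div, Real.rpow_inv_le_iff_of_pos (by positivity) (by positivity) hα.1]
    exact (div_le_iff₀' hβ).mpr h
  calc β ^ (-(1 / α)) * d ^ (1 / α) / B ^ (1 / α - 1)
      ≤ β ^ (-(1 / α)) * d ^ (1 / α) / W ^ (1 / α - 1) := by gcongr
    _ = (d / W / β) ^ (1 / α) * W := by
        rw [Real.div_rpow (by positivity) hβ.le, Real.div_rpow hd hW.le, Real.rpow_neg hβ.le,
          Real.rpow_sub_one hW.ne']
        field_simp
    _ ≤ r := (le_div_iff₀ hW).mp hsolve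

section ZeroOne

variable [DecidableEq ι]

theorem condRisk_zeroOneLoss (sel : X → ι) (w : ι → ℝ) (s : X) :
    condRisk (zeroOneLoss sel) w s = ∑ j, w j - w (sel s) := by
  simp [condRisk, zeroOneLoss, ← sum_erase_eq_sub, sum_ite, filter_ne]

/-- Pointwise `Γ`-consistency on `S` for `Γ t = β * t ^ α`: under every probability vector on the
labels, the zero-one regret of `sel` is at most `Γ` of the regret of the surrogate `ℓ`. -/
def IsPowerConsistent (S : Set X) (sel : X → ι) (ℓ : X → ι → ℝ) (α β : ℝ) : Prop :=
  ∀ p ∈ stdSimplex ℝ ι, ∀ s ∈ S,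
    condRegret (zeroOneLoss sel) S p s ≤ β * condRegret ℓ S p s ^ α

theorem IsPowerConsistent.rpow_div_le_condRegret (hcons : IsPowerConsistent S sel ℓ α β)
    (hα : α ∈ Set.Ioc (0 : ℝ) 1) (hβ : 0 < β) (hℓ : ∀ s j, 0 ≤ ℓ s j) (hw : ∀ j, 0 ≤ w j)
    (hs : s ∈ S) {B d : ℝ} (hB : ∑ j, w j ≤ B) (hd : 0 ≤ d)
    (hdw : d ≤ condRegret (zeroOneLoss sel) S w s) :
    β ^ (-(1 / α)) * d ^ (1 / α) / B ^ (1 / α - 1) ≤ condRegret ℓ S w s := by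
  have hr : 0 ≤ condRegret ℓ S w s := condRegret_nonneg hℓ hw hs
  rcases (sum_nonneg fun j _ => hw j : 0 ≤ ∑ j, w j).eq_or_lt with hW | hW
  · have hw0 : w = (0 : ℝ) • w := by
      ext j
      simpa using (sum_eq_zero_iff_of_nonneg fun j _ => hw j).mp hW.symm j (mem_univ j)
    have hd0 : d = 0 := by
      rw [hw0, condRegret_smul le_rfl, zero_mul] at hdw
      exact hdw.antisymm hd
    rwa [hd0, Real.zero_rpow (one_div_ne_zero hα.1.ne'), mul_zero, zero_div]
  · have hp : (∑ j, w j)⁻¹ • w ∈ stdSimplex ℝ ι :=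
      ⟨fun j => mul_nonneg (inv_nonneg.mpr hW.le) (hw j), by
        simp only [Pi.smul_apply, smul_eq_mul, ← mul_sum, inv_mul_cancel₀ hW.ne']⟩
    have hnorm := hcons _ hp s hs
    simp only [condRegret_smul (inv_nonneg.mpr hW.le), inv_mul_eq_div] at hnorm
    exact rpow_div_le_of_div_le_mul_rpow hα hβ hd hr hW hB
      ((div_le_div_of_nonneg_right hdw hW.le).trans hnorm)

end ZeroOne

/-- The total cost of the labels other than `j`. As a label weight it turns cost-sensitive
classification with costs `c` into weighted zero-one classification. -/
def complCost (c : ι → ℝ) (j : ι) : ℝ :=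
  ∑ i, c i - c j

theorem complCost_nonneg (hc : ∀ j, 0 ≤ c j) (j : ι) : 0 ≤ complCost c j :=
  sub_nonneg.mpr (single_le_sum (fun i _ => hc i) (mem_univ j))

theorem sum_complCost (c : ι → ℝ) :
    ∑ j, complCost c j = ((Fintype.card ι : ℝ) - 1) * ∑ j, c j := by
  simp [complCost, sub_mul]

variable [DecidableEq ι]

theorem cost_sub_le_condRegret_complCost (hc : ∀ j, 0 ≤ c j) {i : ι} (hi : ∃ s' ∈ S, sel s' = i)
    (s : X) : c (sel s) - c i ≤ condRegret (zeroOneLoss sel) S (complCost c) s := by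
  obtain ⟨s', hs', rfl⟩ := hi
  calc c (sel s) - c (sel s')
      = condRisk (zeroOneLoss sel) (complCost c) s
          - condRisk (zeroOneLoss sel) (complCost c) s' := by
        simp only [condRisk_zeroOneLoss, complCost]
        ring
    _ ≤ condRegret (zeroOneLoss sel) S (complCost c) s :=
        condRisk_sub_le_condRegret (zeroOneLoss_nonneg sel) (complCost_nonneg hc) s hs'

theorem IsPowerConsistent.cost_sub_rpow_div_le_condRegret (hcons : IsPowerConsistent S sel ℓ α β)
    (hα : α ∈ Set.Ioc (0 : ℝ) 1) (hβ : 0 < β) (hℓ : ∀ s j, 0 ≤ ℓ s j) (hc : ∀ j, 0 ≤ c j)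
    (hs : s ∈ S) {i : ι} (hi : ∃ s' ∈ S, sel s' = i) (his : c i ≤ c (sel s)) {B : ℝ}
    (hB : ((Fintype.card ι : ℝ) - 1) * ∑ j, c j ≤ B) :
    β ^ (-(1 / α)) * (c (sel s) - c i) ^ (1 / α) / B ^ (1 / α - 1)
      ≤ condRegret ℓ S (complCost c) s :=
  hcons.rpow_div_le_condRegret hα hβ hℓ (complCost_nonneg hc) hs (sum_complCost c ▸ hB)
    (sub_nonneg.mpr his) (cost_sub_le_condRegret_complCost hc hi s)

end CostSensitive

section Deferral

variable {nE : ℕ} {cbar : Fin nE → ℝ} {sel : (Fin (nE + 1) → ℝ) → Fin (nE + 1)}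
  {ℓ : (Fin (nE + 1) → ℝ) → Fin (nE + 1) → ℝ} {A : Set ℝ} {S : Set (Fin (nE + 1) → ℝ)}
  {L lbar : ℝ} {s : Fin (nE + 1) → ℝ}

/-- The costs of the deferral labels: `L` for predicting (label `0`), `cbar j` for deferring to
expert `j` (label `j.succ`). -/
def labelCost (L : ℝ) (cbar : Fin nE → ℝ) : Fin (nE + 1) → ℝ :=
  Fin.cons L cbar

theorem sum_labelCost (L : ℝ) (cbar : Fin nE → ℝ) :
    ∑ j, labelCost L cbar j = L + ∑ j, cbar j := by
  simp only [labelCost, Fin.sum_cons]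

theorem le_labelCost {a : ℝ} (hL : a ≤ L) (hcbar : ∀ j, a ≤ cbar j) (k : Fin (nE + 1)) :
    a ≤ labelCost L cbar k := by
  cases k using Fin.cases with
  | zero => exact hL
  | succ j => exact hcbar j

theorem Dcond_eq_labelCost (cbar : Fin nE → ℝ) (sel : (Fin (nE + 1) → ℝ) → Fin (nE + 1)) (L : ℝ)
    (s : Fin (nE + 1) → ℝ) : Dcond nE cbar sel L s = labelCost L cbar (sel s) := by
  unfold Dcond
  cases sel s using Fin.cases with
  | zero => simp [labelCost, (Fin.succ_ne_zero _).symm]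
  | succ j => simp [labelCost]

theorem Dstar_eq_of_forall_le {m : Fin nE} (hA : A.Nonempty) (hmin : ∀ j, cbar m ≤ cbar j)
    (hmA : ∀ L ∈ A, cbar m ≤ L) : Dstar nE cbar A = cbar m := by
  have hm : ⨅ j, cbar j = cbar m := IsLeast.csInf_eq ⟨⟨m, rfl⟩, Set.forall_mem_range.mpr hmin⟩
  rw [Dstar, hm, min_eq_right (le_csInf hA hmA)]

theorem Ccond_eq_condRisk (cbar : Fin nE → ℝ) (ℓ : (Fin (nE + 1) → ℝ) → Fin (nE + 1) → ℝ) (L : ℝ)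
    (s : Fin (nE + 1) → ℝ) :
    Ccond nE cbar ℓ L s
      = condRisk ℓ (complCost (labelCost L cbar)) s - ((nE : ℝ) - 1) * L := by
  simp [Ccond, condRisk, complCost, labelCost, Fin.sum_univ_succ, sum_erase_eq_sub, add_sub_assoc]

theorem Cstar_le_Ccond (hℓ : ∀ s j, 0 ≤ ℓ s j) (hcbar : ∀ j, 0 ≤ cbar j)
    (hA : A ⊆ Set.Icc 0 lbar) (hL : L ∈ A) (hs : s ∈ S) :
    Cstar nE cbar ℓ A S ≤ Ccond nE cbar ℓ L s := by
  -- The absolute value covers `nE = 0`, where the factor `nE - 1` is negative.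
  refine csInf_le ⟨-(|(nE : ℝ) - 1| * lbar), ?_⟩ ⟨L, hL, s, hs, rfl⟩
  rintro _ ⟨L', hL', s', -, rfl⟩
  have hrisk : 0 ≤ condRisk ℓ (complCost (labelCost L' cbar)) s' :=
    condRisk_nonneg hℓ (complCost_nonneg (le_labelCost (hA hL').1 hcbar)) s'
  have hoffset : ((nE : ℝ) - 1) * L' ≤ |(nE : ℝ) - 1| * lbar :=
    mul_le_mul (le_abs_self _) (hA hL').2 (hA hL').1 (abs_nonneg _)
  rw [Ccond_eq_condRisk]
  linarith

theorem condRegret_le_Ccond_sub_Cstar (hℓ : ∀ s j, 0 ≤ ℓ s j) (hcbar : ∀ j, 0 ≤ cbar j)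
    (hA : A ⊆ Set.Icc 0 lbar) (hL : L ∈ A) (hs : s ∈ S) :
    condRegret ℓ S (complCost (labelCost L cbar)) s
      ≤ Ccond nE cbar ℓ L s - Cstar nE cbar ℓ A S := by
  refine condRegret_le hs fun s' hs' => ?_
  have hstar : Cstar nE cbar ℓ A S ≤ Ccond nE cbar ℓ L s' := Cstar_le_Ccond hℓ hcbar hA hL hs'
  rw [Ccond_eq_condRisk] at hstar ⊢
  linarith

theorem caseII_surrogate_regret_lower_bound_general (hℓ : ∀ s j, 0 ≤ ℓ s j)
    (hA : A ⊆ Set.Icc 0 lbar) {C : Fin nE → ℝ} (hcbar : ∀ j, cbar j ∈ Set.Icc 0 (C j)) {α β : ℝ}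
    (hα : α ∈ Set.Ioc (0 : ℝ) 1) (hβ : 0 < β) (hcons : IsPowerConsistent S sel ℓ α β)
    {m : Fin nE} (hmin : ∀ j, cbar m ≤ cbar j) (hmA : ∀ L' ∈ A, cbar m ≤ L')
    (hmS : ∃ s' ∈ S, sel s' = m.succ) (hL : L ∈ A) (hs : s ∈ S) :
    β ^ (-(1 / α)) * (Dcond nE cbar sel L s - Dstar nE cbar A) ^ (1 / α)
        / ((nE : ℝ) * (lbar + ∑ j, C j)) ^ (1 / α - 1)
      ≤ Ccond nE cbar ℓ L s - Cstar nE cbar ℓ A S := by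
  have hc : ∀ k, 0 ≤ labelCost L cbar k := le_labelCost (hA hL).1 fun j => (hcbar j).1
  have hB : ((Fintype.card (Fin (nE + 1)) : ℝ) - 1) * ∑ k, labelCost L cbar k
      ≤ nE * (lbar + ∑ j, C j) := by
    rw [Fintype.card_fin, Nat.cast_succ, add_sub_cancel_right, sum_labelCost]
    gcongr with j
    exacts [(hA hL).2, (hcbar j).2]
  rw [Dcond_eq_labelCost, Dstar_eq_of_forall_le ⟨L, hL⟩ hmin hmA]
  exact (hcons.cost_sub_rpow_div_le_condRegret hα hβ hℓ hc hs hmS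
    (le_labelCost (hmA L hL) hmin _) hB).trans
      (condRegret_le_Ccond_sub_Cstar hℓ (fun j => (hcbar j).1) hA hL hs)

end Deferral

/-- Case II of the proof of Theorem 3.1, conditional form. -/
theorem caseII_surrogate_regret_lower_bound (nE : ℕ) (hnE : 1 ≤ nE)
    (sel : (Fin (nE + 1) → ℝ) → Fin (nE + 1))
    (hsel : ∀ (s : Fin (nE + 1) → ℝ) (j : Fin (nE + 1)), s j ≤ s (sel s))
    (S : Set (Fin (nE + 1) → ℝ)) (hS : S.Nonempty)
    (hreg : ∀ j : Fin (nE + 1), ∃ s ∈ S, sel s = j)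
    (ℓ : (Fin (nE + 1) → ℝ) → Fin (nE + 1) → ℝ)
    (hℓ0 : ∀ s j, 0 ≤ ℓ s j)
    (hℓ1 : ∀ s j, j ≠ sel s → 1 ≤ ℓ s j)
    (lbar : ℝ) (hlbar : 0 < lbar)
    (C : Fin nE → ℝ) (hC : ∀ j, 0 < C j)
    (A : Set ℝ) (hA : A.Nonempty) (hAsub : A ⊆ Set.Icc 0 lbar)
    (cbar : Fin nE → ℝ) (hcbar : ∀ j, cbar j ∈ Set.Icc 0 (C j))
    (α β : ℝ) (hα : α ∈ Set.Ioc (0 : ℝ) 1) (hβ : 0 < β)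
    (hcons : ∀ p : Fin (nE + 1) → ℝ, (∀ j, 0 ≤ p j) → (∑ j, p j) = 1 → ∀ s ∈ S,
      (∑ j, p j * (if sel s ≠ j then (1 : ℝ) else 0))
          - sInf {v | ∃ s' ∈ S, v = ∑ j, p j * (if sel s' ≠ j then (1 : ℝ) else 0)}
        ≤ β * ((∑ j, p j * ℓ s j)
          - sInf {v | ∃ s' ∈ S, v = ∑ j, p j * ℓ s' j}) ^ α)
    (L : ℝ) (hL : L ∈ A) (s : Fin (nE + 1) → ℝ) (hs : s ∈ S)
    (hlt : (⨅ j, cbar j) < sInf A) :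
    β ^ (-(1 / α)) * (Dcond nE cbar sel L s - Dstar nE cbar A) ^ (1 / α)
        / ((nE : ℝ) * (lbar + ∑ j, C j)) ^ (1 / α - 1)
      ≤ Ccond nE cbar ℓ L s - Cstar nE cbar ℓ A S := by
  have : Nonempty (Fin nE) := ⟨⟨0, hnE⟩⟩
  obtain ⟨m, hm⟩ := exists_eq_ciInf_of_finite (f := cbar)
  exact caseII_surrogate_regret_lower_bound_general hℓ0 hAsub hcbar hα hβ
    (fun p hp => hcons p hp.1 hp.2)
    (fun j => hm.trans_le (ciInf_le (Set.finite_range cbar).bddBelow j))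
    (fun L' hL' => hm.trans_le (hlt.le.trans (csInf_le ⟨0, fun _ h => (hAsub h).1⟩ hL')))
    (hreg m.succ) hL hs
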